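/- For every function ψ : ℝ → ℝ that is continuous on [-m,ℓ], continuously differentiable on [-m,0] and on [0,ℓ] (with piecewise derivative ψ'), and satisfies ψ(-m) = ψ(ℓ) = 0, one has the identity (g(ρ0⁺ − ρ0⁻)/2) ψ(0)² − (1/2)∫_{-m}^ℓ p ρ0 (ψ' − (g/p) ψ)² = −(1/2)∫_{-m}^ℓ p ρ0 (ψ')². In particular the left-hand side is ≤ 0. -/

import Mathlib

open Set MeasureTheory intervalIntegral Filter Topology

noncomputable section

namespace RT

/-- The piecewise integral `∫_{-m}^0 + ∫_0^ℓ`. -/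
def pwInt (m l : ℝ) (f : ℝ → ℝ) : ℝ :=
  (∫ x in (-m)..(0:ℝ), f x) + ∫ x in (0:ℝ)..l, f x

/-- `f` restricted to `[-m,0)` extends continuously to `[-m,0]`, and `f` restricted to
`(0,ℓ]` extends continuously to `[0,ℓ]`. -/
def PiecewiseCont (m l : ℝ) (f : ℝ → ℝ) : Prop :=
  (∃ F : ℝ → ℝ, ContinuousOn F (Icc (-m) 0) ∧ EqOn f F (Ico (-m) 0)) ∧
  (∃ F : ℝ → ℝ, ContinuousOn F (Icc 0 l) ∧ EqOn f F (Ioc 0 l))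

/-- A profile function: the restriction to `[-m,0)` extends continuously to `[-m,0]`, and
the function is continuous on `[0,ℓ]` (hence right-continuous at `0`). -/
def Profile (m l : ℝ) (f : ℝ → ℝ) : Prop :=
  (∃ F : ℝ → ℝ, ContinuousOn F (Icc (-m) 0) ∧ EqOn f F (Ico (-m) 0)) ∧
  ContinuousOn f (Icc 0 l)

/-- The four steady-state profiles `ρ0, p, ε0, δ0` with their positivity assumptions. -/
def ProfilesHyp (m l : ℝ) (ρ0 p ε0 δ0 : ℝ → ℝ) : Prop :=
  Profile m l ρ0 ∧ Profile m l p ∧ Profile m l ε0 ∧ Profile m l δ0 ∧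
  (∀ x ∈ Icc (-m) l, 0 < ρ0 x) ∧ (∀ x ∈ Icc (-m) l, 0 < p x) ∧
  (∀ x ∈ Icc (-m) l, 0 < ε0 x) ∧ (∀ x ∈ Icc (-m) l, 0 ≤ δ0 x)

/-- `f` is continuous on `[-m,ℓ]` and continuously differentiable on `[-m,0]` and on
`[0,ℓ]`, with piecewise derivative `fd`. -/
def PiecewiseC1 (m l : ℝ) (f fd : ℝ → ℝ) : Prop :=
  ContinuousOn f (Icc (-m) l) ∧
  (∀ x ∈ Ico (-m) 0, HasDerivWithinAt f (fd x) (Icc (-m) 0) x) ∧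
  (∀ x ∈ Ioc 0 l, HasDerivWithinAt f (fd x) (Icc 0 l) x) ∧
  PiecewiseCont m l fd

/-- An admissible pair `(φ,ψ)` with piecewise derivatives `(φd,ψd)`. -/
def Admissible (m l : ℝ) (φ ψ φd ψd : ℝ → ℝ) : Prop :=
  PiecewiseC1 m l φ φd ∧ PiecewiseC1 m l ψ ψd ∧
  φ (-m) = 0 ∧ φ l = 0 ∧ ψ (-m) = 0 ∧ ψ l = 0

/-- The energy `E(φ,ψ;s)`. -/
def energyE (m l g σ k : ℝ) (ρ0 p ε0 δ0 : ℝ → ℝ) (φ ψ φd ψd : ℝ → ℝ) (s : ℝ) : ℝ :=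
  σ * k ^ 2 / 2 * (ψ 0) ^ 2
  + (1 / 2) * pwInt m l (fun x =>
      (s * δ0 x + p x * ρ0 x) * (ψd x + k * φ x) ^ 2 - 2 * g * ρ0 x * k * φ x * ψ x)
  + (s / 2) * pwInt m l (fun x =>
      ε0 x * ((φd x - k * ψ x) ^ 2 + (ψd x - k * φ x) ^ 2
        + (1 / 3) * (ψd x + k * φ x) ^ 2))

/-- The normalization functional `J(φ,ψ)`. -/
def energyJ (m l : ℝ) (ρ0 : ℝ → ℝ) (φ ψ : ℝ → ℝ) : ℝ :=
  (1 / 2) * pwInt m l (fun x => ρ0 x * ((φ x) ^ 2 + (ψ x) ^ 2))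

/-- The viscous part `E1(φ,ψ)` of the energy. -/
def energyE1 (m l k : ℝ) (ε0 δ0 : ℝ → ℝ) (φ ψ φd ψd : ℝ → ℝ) : ℝ :=
  (1 / 2) * pwInt m l (fun x => (δ0 x + ε0 x / 3) * (ψd x + k * φ x) ^ 2)
  + (1 / 2) * pwInt m l (fun x =>
      ε0 x * ((φd x - k * ψ x) ^ 2 + (ψd x - k * φ x) ^ 2))

/-- `μ(s)`: the infimum of `E(·,·;s)` over admissible pairs with `J = 1`. -/
def muInf (m l g σ k : ℝ) (ρ0 p ε0 δ0 : ℝ → ℝ) (s : ℝ) : ℝ :=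
  sInf { e : ℝ | ∃ φ ψ φd ψd : ℝ → ℝ, Admissible m l φ ψ φd ψd ∧
    energyJ m l ρ0 φ ψ = 1 ∧ e = energyE m l g σ k ρ0 p ε0 δ0 φ ψ φd ψd s }

/-- The hydrostatic steady-state relation `ρ0' = -g ρ0 / p` on each piece. -/
def Hydrostatic (m l g : ℝ) (ρ0 p : ℝ → ℝ) : Prop :=
  (∀ x ∈ Ico (-m) 0, HasDerivWithinAt ρ0 (-g * ρ0 x / p x) (Ico (-m) 0) x) ∧
  (∀ x ∈ Ioc 0 l, HasDerivWithinAt ρ0 (-g * ρ0 x / p x) (Ioc 0 l) x)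

end RT

/-!
With `q = g ρ0` and `w = p ρ0`, the hydrostatic relation is the Riccati equation `q' = -q² / w`.
Hence, as in Legendre's treatment of the second variation, `w (ψ' - (q / w) ψ)²` and `w ψ'²` differ
by the exact derivative `(q ψ²)'`. Integrated over the two pieces, this leaves the jump of `q` at
the interface `0`, times `ψ(0)²`.
-/

namespace RT

theorem aestronglyMeasurable_of_hasDerivAt {E : Type*} [NormedAddCommGroup E] [NormedSpace ℝ E]
    [CompleteSpace E] {μ : Measure ℝ} {f f' : ℝ → E} {s : Set ℝ} (hs : MeasurableSet s)
    (hderiv : ∀ x ∈ s, HasDerivAt f (f' x) x) : AEStronglyMeasurable f' (μ.restrict s) :=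
  (aestronglyMeasurable_deriv f _).congr <|
    (ae_restrict_mem hs).mono fun x hx => (hderiv x hx).deriv

theorem integrable_of_sq_le_mul {α : Type*} [MeasurableSpace α] {μ : Measure α} {f u v : α → ℝ}
    (hf : AEStronglyMeasurable f μ) (hu : Integrable u μ) (hv : Integrable v μ)
    (hu0 : 0 ≤ᵐ[μ] u) (hv0 : 0 ≤ᵐ[μ] v) (hfuv : ∀ᵐ x ∂μ, f x ^ 2 ≤ u x * v x) :
    Integrable f μ := by
  refine (hu.add hv).mono' hf ?_
  filter_upwards [hu0, hv0, hfuv] with x hux hvx hx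
  simp only [Pi.zero_apply] at hux hvx
  exact abs_le_of_sq_le_sq (by simp only [Pi.add_apply]; nlinarith) (add_nonneg hux hvx)

section Interval

variable {a b : ℝ}

theorem intervalIntegrable_deriv_of_nonpos_of_tendsto {f f' : ℝ → ℝ} {fa fb : ℝ}
    (hab : a < b) (hderiv : ∀ x ∈ Ioo a b, HasDerivAt f (f' x) x)
    (hneg : ∀ x ∈ Ioo a b, f' x ≤ 0)
    (ha : Tendsto f (𝓝[>] a) (𝓝 fa)) (hb : Tendsto f (𝓝[<] b) (𝓝 fb)) :
    IntervalIntegrable f' volume a b := by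
  have hf : ContinuousOn f (Ioo a b) := fun x hx => (hderiv x hx).continuousAt.continuousWithinAt
  have hext : ContinuousOn (extendFrom (Ioo a b) f) (Icc a b) :=
    continuousOn_Icc_extendFrom_Ioo hf ha hb
  have hextderiv : ∀ x ∈ Ioo a b, HasDerivAt (extendFrom (Ioo a b) f) (f' x) x := fun x hx =>
    (hderiv x hx).congr_of_eventuallyEq <| eventuallyEq_of_mem (isOpen_Ioo.mem_nhds hx)
      (extendFrom_extends hf)
  have hint : IntegrableOn (fun x => -f' x) (Ioc a b) :=
    integrableOn_deriv_of_nonneg hext.neg (fun x hx => (hextderiv x hx).neg)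
      fun x hx => neg_nonneg.mpr (hneg x hx)
  exact (intervalIntegrable_iff_integrableOn_Ioc_of_le hab.le).mpr (by simpa using hint.neg)

theorem integral_nonneg_of_Ioo {f : ℝ → ℝ} (hab : a ≤ b) (hf : ∀ x ∈ Ioo a b, 0 ≤ f x) :
    0 ≤ ∫ x in a..b, f x := by
  rw [integral_of_le hab, integral_Ioc_eq_integral_Ioo]
  exact setIntegral_nonneg measurableSet_Ioo hf

end Interval

section Riccati

variable {a b qa qb : ℝ} {q w ψ ψ' : ℝ → ℝ}

theorem intervalIntegrable_riccati_mul_sq (hab : a < b) (hw : ∀ x ∈ Ioo a b, 0 < w x)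
    (hq : ∀ x ∈ Ioo a b, HasDerivAt q (-q x ^ 2 / w x) x)
    (hqa : Tendsto q (𝓝[>] a) (𝓝 qa)) (hqb : Tendsto q (𝓝[<] b) (𝓝 qb))
    (hψ : ContinuousOn ψ (Icc a b)) :
    IntervalIntegrable (fun x => q x ^ 2 / w x * ψ x ^ 2) volume a b := by
  -- `w` may tend to `0` at an endpoint; `q² / w = -q'` is integrable because `q` is monotone.
  have hdecr : ∀ x ∈ Ioo a b, -q x ^ 2 / w x ≤ 0 := fun x hx =>
    div_nonpos_of_nonpos_of_nonneg (neg_nonpos.mpr (sq_nonneg _)) (hw x hx).le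
  have hint : IntervalIntegrable (fun x => q x ^ 2 / w x) volume a b := by
    simpa [neg_div, Pi.neg_def] using
      (intervalIntegrable_deriv_of_nonpos_of_tendsto hab hq hdecr hqa hqb).neg
  exact hint.mul_continuousOn (by rw [uIcc_of_le hab.le]; exact hψ.pow 2)

theorem intervalIntegrable_riccati_cross (hab : a < b) (hw : ∀ x ∈ Ioo a b, 0 < w x)
    (hq : ∀ x ∈ Ioo a b, HasDerivAt q (-q x ^ 2 / w x) x)
    (hqa : Tendsto q (𝓝[>] a) (𝓝 qa)) (hqb : Tendsto q (𝓝[<] b) (𝓝 qb))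
    (hψ : ContinuousOn ψ (Icc a b)) (hψ' : ∀ x ∈ Ioo a b, HasDerivAt ψ (ψ' x) x)
    (hE : IntervalIntegrable (fun x => w x * ψ' x ^ 2) volume a b) :
    IntervalIntegrable (fun x => q x * ψ x * ψ' x) volume a b := by
  have hqcont : ContinuousOn q (Ioo a b) := fun x hx => (hq x hx).continuousAt.continuousWithinAt
  have hmeas : AEStronglyMeasurable (fun x => q x * ψ x * ψ' x) (volume.restrict (Ioo a b)) :=
    ((hqcont.mul (hψ.mono Ioo_subset_Icc_self)).aestronglyMeasurable measurableSet_Ioo).mul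
      (aestronglyMeasurable_of_hasDerivAt measurableSet_Ioo hψ')
  have hq2 := intervalIntegrable_riccati_mul_sq hab hw hq hqa hqb hψ
  rw [intervalIntegrable_iff_integrableOn_Ioo_of_le hab.le] at hq2 hE ⊢
  refine integrable_of_sq_le_mul hmeas hq2 hE ?_ ?_ ?_
  all_goals
    filter_upwards [ae_restrict_mem measurableSet_Ioo] with x hx
    have hwx := hw x hx
  · exact mul_nonneg (div_nonneg (sq_nonneg _) hwx.le) (sq_nonneg _)
  · exact mul_nonneg hwx.le (sq_nonneg _)
  · exact le_of_eq (by field_simp)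

theorem integral_riccati_square (hab : a < b) (hw : ∀ x ∈ Ioo a b, 0 < w x)
    (hq : ∀ x ∈ Ioo a b, HasDerivAt q (-q x ^ 2 / w x) x)
    (hqa : Tendsto q (𝓝[>] a) (𝓝 qa)) (hqb : Tendsto q (𝓝[<] b) (𝓝 qb))
    (hψ : ContinuousOn ψ (Icc a b)) (hψ' : ∀ x ∈ Ioo a b, HasDerivAt ψ (ψ' x) x)
    (hE : IntervalIntegrable (fun x => w x * ψ' x ^ 2) volume a b) :
    ∫ x in a..b, w x * (ψ' x - q x / w x * ψ x) ^ 2 =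
      (∫ x in a..b, w x * ψ' x ^ 2) - (qb * ψ b ^ 2 - qa * ψ a ^ 2) := by
  let flux' : ℝ → ℝ := fun x => 2 * (q x * ψ x * ψ' x) - q x ^ 2 / w x * ψ x ^ 2
  have hflux : ∀ x ∈ Ioo a b, HasDerivAt (fun y => q y * ψ y ^ 2) (flux' x) x := fun x hx =>
    ((hq x hx).mul ((hψ' x hx).pow 2)).congr_deriv (by simp only [flux', Pi.pow_apply]; ring)
  have hint : IntervalIntegrable flux' volume a b :=
    ((intervalIntegrable_riccati_cross hab hw hq hqa hqb hψ hψ' hE).const_mul 2).sub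
      (intervalIntegrable_riccati_mul_sq hab hw hq hqa hqb hψ)
  have hψa : Tendsto ψ (𝓝[>] a) (𝓝 (ψ a)) :=
    (hψ a (left_mem_Icc.mpr hab.le)).mono_of_mem_nhdsWithin (Icc_mem_nhdsGT hab)
  have hψb : Tendsto ψ (𝓝[<] b) (𝓝 (ψ b)) :=
    (hψ b (right_mem_Icc.mpr hab.le)).mono_of_mem_nhdsWithin (Icc_mem_nhdsLT hab)
  calc ∫ x in a..b, w x * (ψ' x - q x / w x * ψ x) ^ 2
      = ∫ x in a..b, (w x * ψ' x ^ 2 - flux' x) := by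
        refine integral_congr_Ioo_of_le hab.le fun x hx => ?_
        have hwx := (hw x hx).ne'
        simp only [flux']
        field_simp
        ring
    _ = (∫ x in a..b, w x * ψ' x ^ 2) - ∫ x in a..b, flux' x := integral_sub hE hint
    _ = (∫ x in a..b, w x * ψ' x ^ 2) - (qb * ψ b ^ 2 - qa * ψ a ^ 2) := by
        rw [integral_eq_sub_of_hasDerivAt_of_tendsto hab hflux hint (hqa.mul (hψa.pow 2))
          (hqb.mul (hψb.pow 2))]

end Riccati

theorem integral_hydrostatic_square {a b g ρa ρb : ℝ} {ρ p ψ ψ' : ℝ → ℝ} (hab : a < b)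
    (hpρ : ∀ x ∈ Ioo a b, 0 < p x * ρ x)
    (hρ : ∀ x ∈ Ioo a b, HasDerivAt ρ (-g * ρ x / p x) x)
    (hρa : Tendsto ρ (𝓝[>] a) (𝓝 ρa)) (hρb : Tendsto ρ (𝓝[<] b) (𝓝 ρb))
    (hψ : ContinuousOn ψ (Icc a b)) (hψ' : ∀ x ∈ Ioo a b, HasDerivAt ψ (ψ' x) x)
    (hE : IntervalIntegrable (fun x => p x * ρ x * ψ' x ^ 2) volume a b) :
    ∫ x in a..b, p x * ρ x * (ψ' x - g / p x * ψ x) ^ 2 =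
      (∫ x in a..b, p x * ρ x * ψ' x ^ 2) - g * (ρb * ψ b ^ 2 - ρa * ψ a ^ 2) := by
  have hne : ∀ x ∈ Ioo a b, p x ≠ 0 ∧ ρ x ≠ 0 := fun x hx => mul_ne_zero_iff.mp (hpρ x hx).ne'
  have hriccati : ∀ x ∈ Ioo a b,
      HasDerivAt (fun y => g * ρ y) (-(g * ρ x) ^ 2 / (p x * ρ x)) x := fun x hx => by
    obtain ⟨hp0, hρ0⟩ := hne x hx
    exact ((hρ x hx).const_mul g).congr_deriv (by field_simp)
  calc ∫ x in a..b, p x * ρ x * (ψ' x - g / p x * ψ x) ^ 2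
      = ∫ x in a..b, p x * ρ x * (ψ' x - g * ρ x / (p x * ρ x) * ψ x) ^ 2 :=
        integral_congr_Ioo_of_le hab.le fun x hx => by
          simp only [mul_div_mul_right _ _ (hne x hx).2]
    _ = (∫ x in a..b, p x * ρ x * ψ' x ^ 2) - (g * ρb * ψ b ^ 2 - g * ρa * ψ a ^ 2) :=
        integral_riccati_square hab hpρ hriccati (hρa.const_mul g) (hρb.const_mul g) hψ hψ' hE
    _ = (∫ x in a..b, p x * ρ x * ψ' x ^ 2) - g * (ρb * ψ b ^ 2 - ρa * ψ a ^ 2) := by ring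

section Piecewise

variable {m l : ℝ} {f h : ℝ → ℝ}

theorem PiecewiseCont.mul (hf : PiecewiseCont m l f) (hh : PiecewiseCont m l h) :
    PiecewiseCont m l (fun x => f x * h x) := by
  obtain ⟨⟨F₁, hF₁, hfF₁⟩, ⟨F₂, hF₂, hfF₂⟩⟩ := hf
  obtain ⟨⟨H₁, hH₁, hhH₁⟩, ⟨H₂, hH₂, hhH₂⟩⟩ := hh
  exact ⟨⟨_, hF₁.mul hH₁, fun x hx => congrArg₂ (· * ·) (hfF₁ hx) (hhH₁ hx)⟩,
    ⟨_, hF₂.mul hH₂, fun x hx => congrArg₂ (· * ·) (hfF₂ hx) (hhH₂ hx)⟩⟩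

theorem PiecewiseCont.intervalIntegrable (hm : 0 ≤ m) (hl : 0 ≤ l) (hf : PiecewiseCont m l f) :
    IntervalIntegrable f volume (-m) l := by
  obtain ⟨⟨F₁, hF₁, hfF₁⟩, ⟨F₂, hF₂, hfF₂⟩⟩ := hf
  have hm' : -m ≤ 0 := neg_nonpos.mpr hm
  refine IntervalIntegrable.trans (b := 0) ?_ ?_
  · refine (hF₁.intervalIntegrable_of_Icc hm').congr_uIoo ?_
    rw [uIoo_of_le hm']
    exact (hfF₁.mono Ioo_subset_Ico_self).symm
  · refine (hF₂.intervalIntegrable_of_Icc hl).congr_uIoo ?_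
    rw [uIoo_of_le hl]
    exact (hfF₂.mono Ioo_subset_Ioc_self).symm

theorem Profile.piecewiseCont (hf : Profile m l f) : PiecewiseCont m l f :=
  ⟨hf.1, f, hf.2, fun _ _ => rfl⟩

theorem Profile.tendsto_left (hm : 0 < m) (hf : Profile m l f) :
    Tendsto f (𝓝[>] (-m)) (𝓝 (f (-m))) := by
  obtain ⟨⟨F, hF, hfF⟩, -⟩ := hf
  have hm' : -m < 0 := neg_neg_of_pos hm
  have hF' : ContinuousWithinAt F (Ioi (-m)) (-m) :=
    (hF _ (left_mem_Icc.mpr hm'.le)).mono_of_mem_nhdsWithin (Icc_mem_nhdsGT hm')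
  rw [hfF (left_mem_Ico.mpr hm')]
  exact hF'.tendsto.congr' (hfF.symm.eventuallyEq_of_mem (Ico_mem_nhdsGT hm'))

theorem Profile.tendsto_zero_right (hl : 0 < l) (hf : Profile m l f) :
    Tendsto f (𝓝[>] 0) (𝓝 (f 0)) :=
  (hf.2 0 (left_mem_Icc.mpr hl.le)).mono_of_mem_nhdsWithin (Icc_mem_nhdsGT hl)

theorem Profile.tendsto_right (hl : 0 < l) (hf : Profile m l f) :
    Tendsto f (𝓝[<] l) (𝓝 (f l)) :=
  (hf.2 l (right_mem_Icc.mpr hl.le)).mono_of_mem_nhdsWithin (Icc_mem_nhdsLT hl)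

theorem PiecewiseC1.hasDerivAt {fd : ℝ → ℝ} (hf : PiecewiseC1 m l f fd) :
    ∀ x ∈ Ioo (-m) 0 ∪ Ioo 0 l, HasDerivAt f (fd x) x := by
  rintro x (hx | hx)
  · exact (hf.2.1 x (Ioo_subset_Ico_self hx)).hasDerivAt (Icc_mem_nhds hx.1 hx.2)
  · exact (hf.2.2.1 x (Ioo_subset_Ioc_self hx)).hasDerivAt (Icc_mem_nhds hx.1 hx.2)

theorem Hydrostatic.hasDerivAt {g : ℝ} {ρ0 p : ℝ → ℝ} (hρ : Hydrostatic m l g ρ0 p) :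
    ∀ x ∈ Ioo (-m) 0 ∪ Ioo 0 l, HasDerivAt ρ0 (-g * ρ0 x / p x) x := by
  rintro x (hx | hx)
  · exact (hρ.1 x (Ioo_subset_Ico_self hx)).hasDerivAt (Ico_mem_nhds hx.1 hx.2)
  · exact (hρ.2 x (Ioo_subset_Ioc_self hx)).hasDerivAt (Ioc_mem_nhds hx.1 hx.2)

theorem pwInt_nonneg (hm : 0 ≤ m) (hl : 0 ≤ l) (hf : ∀ x ∈ Ioo (-m) 0 ∪ Ioo 0 l, 0 ≤ f x) :
    0 ≤ pwInt m l f :=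
  add_nonneg (integral_nonneg_of_Ioo (neg_nonpos.mpr hm) fun x hx => hf x (.inl hx))
    (integral_nonneg_of_Ioo hl fun x hx => hf x (.inr hx))

theorem Ioo_union_Ioo_subset_Icc (hm : 0 ≤ m) (hl : 0 ≤ l) :
    Ioo (-m) 0 ∪ Ioo 0 l ⊆ Icc (-m) l :=
  union_subset (Ioo_subset_Icc_self.trans (Icc_subset_Icc_right hl))
    (Ioo_subset_Icc_self.trans (Icc_subset_Icc_left (neg_nonpos.mpr hm)))

end Piecewise

theorem zero_frequency_stability_identity_general {m l g ρ0minus : ℝ} {ρ0 p ψ ψd : ℝ → ℝ}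
    (hm : 0 < m) (hl : 0 < l) (hρ0 : Profile m l ρ0)
    (hpρ : ∀ x ∈ Ioo (-m) 0 ∪ Ioo 0 l, 0 < p x * ρ0 x)
    (hhydro : ∀ x ∈ Ioo (-m) 0 ∪ Ioo 0 l, HasDerivAt ρ0 (-g * ρ0 x / p x) x)
    (hρm : Tendsto ρ0 (𝓝[<] 0) (𝓝 ρ0minus))
    (hψ : ContinuousOn ψ (Icc (-m) l))
    (hψd : ∀ x ∈ Ioo (-m) 0 ∪ Ioo 0 l, HasDerivAt ψ (ψd x) x)
    (hE : IntervalIntegrable (fun x => p x * ρ0 x * ψd x ^ 2) volume (-m) l) :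
    g * (ρ0 0 - ρ0minus) / 2 * ψ 0 ^ 2 + g / 2 * (ρ0 (-m) * ψ (-m) ^ 2 - ρ0 l * ψ l ^ 2)
        - (1 / 2) * pwInt m l (fun x => p x * ρ0 x * (ψd x - g / p x * ψ x) ^ 2)
      = -(1 / 2) * pwInt m l (fun x => p x * ρ0 x * ψd x ^ 2) ∧
    g * (ρ0 0 - ρ0minus) / 2 * ψ 0 ^ 2 + g / 2 * (ρ0 (-m) * ψ (-m) ^ 2 - ρ0 l * ψ l ^ 2)
        - (1 / 2) * pwInt m l (fun x => p x * ρ0 x * (ψd x - g / p x * ψ x) ^ 2) ≤ 0 := by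
  have hm' : -m < 0 := neg_neg_of_pos hm
  have h0 : (0 : ℝ) ∈ uIcc (-m) l := by
    rw [uIcc_of_le (hm'.trans hl).le]
    exact ⟨hm'.le, hl.le⟩
  have hlower := integral_hydrostatic_square hm' (fun x hx => hpρ x (.inl hx))
    (fun x hx => hhydro x (.inl hx)) (hρ0.tendsto_left hm) hρm
    (hψ.mono (Icc_subset_Icc_right hl.le)) (fun x hx => hψd x (.inl hx))
    (hE.mono_set (uIcc_subset_uIcc_left h0))
  have hupper := integral_hydrostatic_square hl (fun x hx => hpρ x (.inr hx))
    (fun x hx => hhydro x (.inr hx)) (hρ0.tendsto_zero_right hl) (hρ0.tendsto_right hl)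
    (hψ.mono (Icc_subset_Icc_left hm'.le)) (fun x hx => hψd x (.inr hx))
    (hE.mono_set (uIcc_subset_uIcc_right h0))
  have hnonneg : 0 ≤ pwInt m l (fun x => p x * ρ0 x * ψd x ^ 2) :=
    pwInt_nonneg hm.le hl.le fun x hx => mul_nonneg (hpρ x hx).le (sq_nonneg _)
  have hidentity : g * (ρ0 0 - ρ0minus) / 2 * ψ 0 ^ 2
        + g / 2 * (ρ0 (-m) * ψ (-m) ^ 2 - ρ0 l * ψ l ^ 2)
        - (1 / 2) * pwInt m l (fun x => p x * ρ0 x * (ψd x - g / p x * ψ x) ^ 2)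
      = -(1 / 2) * pwInt m l (fun x => p x * ρ0 x * ψd x ^ 2) := by
    unfold pwInt
    rw [hlower, hupper]
    ring
  exact ⟨hidentity, by linarith⟩

/-- The zero-frequency identity underlying the small-period stability estimate:
`(g(ρ0⁺ - ρ0⁻)/2) ψ(0)² - (1/2)∫ p ρ0 (ψ' - (g/p)ψ)² = -(1/2)∫ p ρ0 (ψ')²`, so in
particular the left-hand side is nonpositive.  Here `ρ0⁺ = ρ0 0` and `ρ0⁻` is the left
limit of `ρ0` at `0`. -/
theorem zero_frequency_stability_identity (m l g : ℝ) (ρ0 p ψ ψd : ℝ → ℝ)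
    (ρ0minus : ℝ)
    (hm : 0 < m) (hl : 0 < l) (hg : 0 < g)
    (hρ0 : Profile m l ρ0) (hp : Profile m l p)
    (hρ0pos : ∀ x ∈ Icc (-m) l, 0 < ρ0 x) (hppos : ∀ x ∈ Icc (-m) l, 0 < p x)
    (hhydro : Hydrostatic m l g ρ0 p)
    (hρm : Tendsto ρ0 (𝓝[<] 0) (𝓝 ρ0minus))
    (hψ : PiecewiseC1 m l ψ ψd) (hbc1 : ψ (-m) = 0) (hbc2 : ψ l = 0) :
    g * (ρ0 0 - ρ0minus) / 2 * (ψ 0) ^ 2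
        - (1 / 2) * pwInt m l (fun x => p x * ρ0 x * (ψd x - g / p x * ψ x) ^ 2)
      = -(1 / 2) * pwInt m l (fun x => p x * ρ0 x * (ψd x) ^ 2) ∧
    g * (ρ0 0 - ρ0minus) / 2 * (ψ 0) ^ 2
        - (1 / 2) * pwInt m l (fun x => p x * ρ0 x * (ψd x - g / p x * ψ x) ^ 2) ≤ 0 := by
  have hsub := Ioo_union_Ioo_subset_Icc hm.le hl.le
  have hψd := hψ.2.2.2
  have hE : IntervalIntegrable (fun x => p x * ρ0 x * ψd x ^ 2) volume (-m) l := by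
    simpa only [sq] using
      ((hp.piecewiseCont.mul hρ0.piecewiseCont).mul (hψd.mul hψd)).intervalIntegrable hm.le hl.le
  simpa [hbc1, hbc2] using zero_frequency_stability_identity_general hm hl hρ0
    (fun x hx => mul_pos (hppos x (hsub hx)) (hρ0pos x (hsub hx))) hhydro.hasDerivAt hρm hψ.1
    hψ.hasDerivAt hE

end RT
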